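/- The set X = {x/2 : x ∈ BW16, ‖x‖² = 4} of normalized minimal vectors of the Barnes–Wall lattice BW16 is a subset of the unit sphere of ℝ^16 with exactly 4320 elements, and X is a spherical 7-design. -/

import Mathlib

/-!
Venkov's criterion: an antipodal set `X` of unit vectors is a spherical `(2s + 1)`-design as soon as
`∑ x ∈ X, ⟪v, x⟫ ^ (2 * s)` is a constant multiple of `‖v‖ ^ (2 * s)`. Indeed powers of linear forms
determine linear functionals on homogeneous polynomials, and the lower even degrees follow by
multiplying with powers of the norm.

Label the coordinates by `𝔽₂⁴` and let `H` be the extended Hamming code, the binary words orthogonal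
to all affine functions. Then `BW16` is the union of the Construction A lattice of `H` and its
translate by `f0`, so its vectors with `‖x‖ ^ 2 = 4` are the 32 vectors `±2εᵢ`, the `140 * 2 ^ 4`
vectors `±εᵢ±εⱼ±εₖ±εₗ` supported on affine planes, and the `2 ^ 11` vectors obtained from `f0` by
changing the signs on a word of `H`. Changing signs on an affine plane preserves this shell; as a
nonzero word orthogonal to all planes has weight at least `8`, the monomials of degree `6` with an
odd exponent sum to zero. The even monomials of degree `6` are summed by counting the planes through
1, 2 or 3 given points, and the results are proportional to the moments of the sphere.
-/

noncomputable section

open scoped RealInnerProductSpace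

/-- `ℝ^n` with the standard inner product. -/
abbrev E (n : ℕ) := EuclideanSpace ℝ (Fin n)

/-- The standard basis vector `ε i`. -/
def εv {n : ℕ} (i : Fin n) : E n := EuclideanSpace.single i 1

/-- The vector of `ℝ^n` with the given coordinates. -/
def vec {n : ℕ} (x : Fin n → ℝ) : E n := (WithLp.equiv 2 (Fin n → ℝ)).symm x

/-- The vector of `ℝ^n` with the given integer coordinates. -/
def intVec {n : ℕ} (x : Fin n → ℤ) : E n := (WithLp.equiv 2 (Fin n → ℝ)).symm fun i => (x i : ℝ)

/-- A lattice is integral if all pairwise inner products of its elements are integers. -/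
def LatticeIsIntegral {n : ℕ} (L : Submodule ℤ (E n)) : Prop :=
  ∀ x ∈ L, ∀ y ∈ L, ∃ k : ℤ, ⟪x, y⟫ = (k : ℝ)

/-- Two lattices are isometric if a linear isometry of the ambient space carries
one onto the other. -/
def IsometricLattices {n : ℕ} (L M : Submodule ℤ (E n)) : Prop :=
  ∃ g : E n ≃ₗᵢ[ℝ] E n, g '' (L : Set (E n)) = (M : Set (E n))

def f0 : E 16 :=
  vec ![-1/2, 1/2, 1/2, 1/2, 1/2, 1/2, 1/2, 1/2, -1/2, 1/2, 1/2, 1/2, 1/2, 1/2, 1/2, 1/2]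

def g1 : E 16 := εv 0 + εv 4 + εv 8 + εv 12
def g2 : E 16 := εv 0 + εv 2 + εv 4 + εv 6
def g3 : E 16 := εv 0 + εv 2 + εv 8 + εv 10
def g4 : E 16 := εv 0 + εv 2 + εv 12 + εv 14
def g5 : E 16 := εv 0 + εv 1 + εv 2 + εv 3
def g6 : E 16 := εv 0 + εv 1 + εv 4 + εv 5
def g7 : E 16 := εv 0 + εv 1 + εv 6 + εv 7
def g8 : E 16 := εv 0 + εv 1 + εv 8 + εv 9
def g9 : E 16 := εv 0 + εv 1 + εv 10 + εv 11
def g10 : E 16 := εv 0 + εv 1 + εv 12 + εv 13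
def g11 : E 16 := εv 0 + εv 1 + εv 14 + εv 15

/-- The Barnes-Wall lattice `BW₁₆ = ⟨2ε1, …, 2ε16, f0, g1, …, g11⟩`. -/
def BW16 : Submodule ℤ (E 16) :=
  Submodule.span ℤ ((Set.range fun i : Fin 16 => (2 : ℝ) • εv i) ∪
    {f0, g1, g2, g3, g4, g5, g6, g7, g8, g9, g10, g11})

open MeasureTheory

/-- The uniform (rotation-invariant) probability measure on the unit sphere of `ℝ¹⁶`. -/
def sphereUniform : Measure (Metric.sphere (0 : E 16) 1) :=
  ((volume : Measure (E 16)).toSphere Set.univ)⁻¹ • (volume : Measure (E 16)).toSphere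

/-- `X` is a spherical `t`-design: for every polynomial of total degree at most `t`,
the average over `X` equals the average over the sphere with respect to the
rotation-invariant probability measure. -/
def IsSphericalDesign (X : Set (E 16)) (t : ℕ) : Prop :=
  ∀ p : MvPolynomial (Fin 16) ℝ, p.totalDegree ≤ t →
    (∑ᶠ x ∈ X, MvPolynomial.eval (fun i => x i) p) / (X.ncard : ℝ) =
      ∫ ξ, MvPolynomial.eval (fun i => (ξ : E 16) i) p ∂sphereUniform

/-- The set of normalized minimal vectors of `BW₁₆`. -/
def X18 : Set (E 16) := (fun x => (2 : ℝ)⁻¹ • x) '' {x ∈ (BW16 : Set (E 16)) | ‖x‖ ^ 2 = 4}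

/-! ### Linear functionals on homogeneous polynomials -/

section SphericalFunctional

open MvPolynomial Finset
open scoped Nat

variable {σ R : Type*} [CommRing R]

/-- The sum of the values of a polynomial at the points `x a`, for `a ∈ A`. -/
def evalSum {ι : Type*} (A : Finset ι) (x : ι → σ → R) : MvPolynomial σ R →ₗ[R] R :=
  ∑ a ∈ A, (aeval (x a)).toLinearMap

lemma evalSum_apply {ι : Type*} (A : Finset ι) (x : ι → σ → R) (p : MvPolynomial σ R) :
    evalSum A x p = ∑ a ∈ A, eval (x a) p := by
  simp [evalSum, aeval_eq_eval]

lemma eval_smul_of_isHomogeneous {p : MvPolynomial σ R} {m : ℕ} (hp : p.IsHomogeneous m) (c : R)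
    (x : σ → R) : eval (c • x) p = c ^ m * eval x p := by
  rw [eval_eq, eval_eq, mul_sum]
  refine sum_congr rfl fun d hd => ?_
  rw [hp.degree_eq_sum_deg_support hd, ← prod_pow_eq_pow_sum]
  simp only [Pi.smul_apply, smul_eq_mul, mul_pow, prod_mul_distrib]
  ring

variable [Fintype σ]

/-- The linear form `v₁X₁ + ⋯ + vₙXₙ`, whose powers span the homogeneous polynomials. -/
def linearForm (v : σ → R) : MvPolynomial σ R := ∑ i, C (v i) * X i

/-- The squared Euclidean norm as a polynomial. -/
def normSqPoly : MvPolynomial σ R := ∑ i, X i ^ 2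

lemma eval_linearForm (v x : σ → R) : eval x (linearForm v) = ∑ i, v i * x i := by
  simp [linearForm]

lemma eval_normSqPoly (x : σ → R) : eval x normSqPoly = ∑ i, x i ^ 2 := by
  simp [normSqPoly]

lemma isHomogeneous_normSqPoly_pow (k : ℕ) :
    (normSqPoly ^ k : MvPolynomial σ R).IsHomogeneous (2 * k) :=
  (IsHomogeneous.sum _ _ 2 fun i _ => by simpa using (isHomogeneous_X R i).pow 2).pow k

lemma sum_eq_of_mem_support {p : MvPolynomial σ R} {m : ℕ} (hp : p.IsHomogeneous m) {d : σ →₀ ℕ}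
    (hd : d ∈ p.support) : ∑ i, d i = m := by
  rw [hp.degree_eq_sum_deg_support hd]
  exact (sum_subset (subset_univ _) (by simp)).symm

lemma map_eq_zero_of_isHomogeneous {Λ : MvPolynomial σ R →ₗ[R] R} {m : ℕ}
    (h : ∀ α : σ → ℕ, ∑ i, α i = m → Λ (∏ i, X i ^ α i) = 0)
    {p : MvPolynomial σ R} (hp : p.IsHomogeneous m) : Λ p = 0 := by
  rw [p.as_sum, map_sum]
  refine sum_eq_zero fun d hd => ?_
  rw [monomial_eq, Finsupp.prod_fintype _ _ fun i => pow_zero _, ← smul_eq_C_mul, map_smul,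
    h d (sum_eq_of_mem_support hp hd), smul_zero]

lemma map_linearForm_pow [DecidableEq σ] (Λ : MvPolynomial σ R →ₗ[R] R) (v : σ → R) (m : ℕ) :
    Λ (linearForm v ^ m) = ∑ α ∈ piAntidiag univ m,
      (Nat.multinomial univ α * ∏ i, v i ^ α i) * Λ (∏ i, X i ^ α i) := by
  rw [linearForm, sum_pow_eq_sum_piAntidiag, map_sum]
  refine sum_congr rfl fun α _ => ?_
  simp only [mul_pow, prod_mul_distrib, ← map_pow, ← map_prod]
  rw [← mul_assoc, ← map_natCast C, ← map_mul, ← smul_eq_C_mul, map_smul, smul_eq_mul]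

lemma map_eq_zero_of_map_linearForm_pow_eq_zero [IsDomain R] [CharZero R]
    {Λ : MvPolynomial σ R →ₗ[R] R} {m : ℕ} (h : ∀ v, Λ (linearForm v ^ m) = 0)
    {p : MvPolynomial σ R} (hp : p.IsHomogeneous m) : Λ p = 0 := by
  classical
  have : Infinite R := CharZero.infinite R
  -- `v ↦ Λ (linearForm v ^ m)` is itself a polynomial in `v`, with the following coefficients.
  let q : MvPolynomial σ R := ∑ α ∈ piAntidiag univ m,
    monomial (Finsupp.equivFunOnFinite.symm α) (Nat.multinomial univ α * Λ (∏ i, X i ^ α i))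
  have hq : q = 0 := MvPolynomial.funext fun v => by
    rw [map_zero, ← h v, map_linearForm_pow, map_sum]
    refine sum_congr rfl fun α _ => ?_
    rw [eval_monomial, Finsupp.prod_fintype _ _ fun i => pow_zero _, mul_right_comm]
    rfl
  refine map_eq_zero_of_isHomogeneous (fun α hα => ?_) hp
  have hcoeff : coeff (Finsupp.equivFunOnFinite.symm α) q
      = Nat.multinomial univ α * Λ (∏ i, X i ^ α i) := by
    simp [q, coeff_sum, coeff_monomial, hα]
  rw [hq, coeff_zero, eq_comm, mul_eq_zero, Nat.cast_eq_zero] at hcoeff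
  exact hcoeff.resolve_left (Nat.multinomial_pos _ _).ne'

lemma factorial_two_mul_eq (n : ℕ) : (2 * n)! = 2 ^ n * n ! * (2 * n - 1)‼ := by
  cases n with
  | zero => rfl
  | succ n =>
    rw [← Nat.doubleFactorial_two_mul]
    exact Nat.factorial_eq_mul_doubleFactorial (2 * n + 1)

lemma multinomial_two_mul_mul_prod_doubleFactorial (β : σ → ℕ) :
    Nat.multinomial univ (fun i => 2 * β i) * ∏ i, (2 * β i - 1)‼
      = (2 * ∑ i, β i - 1)‼ * Nat.multinomial univ β := by
  have hβ := Nat.multinomial_spec univ β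
  have h2β := Nat.multinomial_spec univ fun i => 2 * β i
  simp only [← mul_sum, factorial_two_mul_eq, prod_mul_distrib, prod_pow_eq_pow_sum, ← hβ] at h2β
  have hpos : 0 < 2 ^ (∑ i, β i) * ∏ i, (β i)! := by positivity
  refine Nat.eq_of_mul_eq_mul_left hpos ?_
  linear_combination h2β

/-- The numbers `∏ i, (2 * β i - 1)‼` are the even moments of the standard Gaussian distribution,
which is invariant under rotations; for `β i = 0` the truncated subtraction gives `0‼ = 1`. -/
lemma map_linearForm_pow_two_mul {Λ : MvPolynomial σ R →ₗ[R] R} {s : ℕ} {c : R}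
    (hodd : ∀ α : σ → ℕ, ∑ i, α i = 2 * s → (∃ i, Odd (α i)) → Λ (∏ i, X i ^ α i) = 0)
    (heven : ∀ β : σ → ℕ, ∑ i, β i = s →
      Λ (∏ i, X i ^ (2 * β i)) = c * ↑(∏ i, (2 * β i - 1)‼)) (v : σ → R) :
    Λ (linearForm v ^ (2 * s)) = c * (2 * s - 1)‼ * (∑ i, v i ^ 2) ^ s := by
  classical
  rw [map_linearForm_pow, sum_pow_eq_sum_piAntidiag, mul_sum]
  symm
  refine sum_of_injOn (fun β i => 2 * β i) (fun β _ γ _ h => ?_) (fun β hβ => ?_)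
    (fun α hα hα' => ?_) fun β hβ => ?_
  · exact funext fun i => Nat.eq_of_mul_eq_mul_left two_pos (congrFun h i)
  · simp_all [← mul_sum]
  · have : ∃ i, Odd (α i) := by
      by_contra! hall
      simp only [Nat.not_odd_iff_even, even_iff_exists_two_mul] at hall
      choose β hβ using hall
      refine hα' ⟨β, ?_, funext fun i => (hβ i).symm⟩
      simp_all [← mul_sum]
    rw [hodd α (by simpa using hα) this, mul_zero]
  · replace hβ : ∑ i, β i = s := by simpa using hβ
    have key := congrArg (Nat.cast (R := R)) (multinomial_two_mul_mul_prod_doubleFactorial β)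
    rw [heven β hβ]
    simp only [hβ, Nat.cast_mul, pow_mul] at key ⊢
    linear_combination (-c * ∏ i, (v i ^ 2) ^ β i) * key

/-- The formal properties of averaging over the unit sphere that determine the averages of
polynomials of degree at most `2 * s + 1`. -/
structure IsSphericalAverage (s : ℕ) (Λ : MvPolynomial σ R →ₗ[R] R) : Prop where
  map_one : Λ 1 = 1
  map_mul_normSqPoly : ∀ p, Λ (p * normSqPoly) = Λ p
  map_odd : ∀ ⦃m⦄, Odd m → ∀ ⦃p⦄, p.IsHomogeneous m → Λ p = 0
  exists_map_linearForm_pow : ∃ c, ∀ v, Λ (linearForm v ^ (2 * s)) = c * (∑ i, v i ^ 2) ^ s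

namespace IsSphericalAverage

variable {s : ℕ} {Λ Λ₁ Λ₂ : MvPolynomial σ R →ₗ[R] R}

lemma map_mul_normSqPoly_pow (h : IsSphericalAverage s Λ) (p : MvPolynomial σ R) (k : ℕ) :
    Λ (p * normSqPoly ^ k) = Λ p := by
  induction k with
  | zero => rw [pow_zero, mul_one]
  | succ k ih => rw [pow_succ, ← mul_assoc, h.map_mul_normSqPoly, ih]

variable [IsDomain R] [CharZero R]

lemma map_eq_of_isHomogeneous_two_mul (h₁ : IsSphericalAverage s Λ₁)
    (h₂ : IsSphericalAverage s Λ₂) {p : MvPolynomial σ R} (hp : p.IsHomogeneous (2 * s)) :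
    Λ₁ p = Λ₂ p := by
  obtain ⟨c₁, hc₁⟩ := h₁.exists_map_linearForm_pow
  obtain ⟨c₂, hc₂⟩ := h₂.exists_map_linearForm_pow
  have hker {q : MvPolynomial σ R} (hq : q.IsHomogeneous (2 * s)) : c₂ * Λ₁ q = c₁ * Λ₂ q := by
    refine sub_eq_zero.mp <| map_eq_zero_of_map_linearForm_pow_eq_zero
      (Λ := c₂ • Λ₁ - c₁ • Λ₂) (fun v => ?_) hq
    simp only [LinearMap.sub_apply, LinearMap.smul_apply, hc₁, hc₂, smul_eq_mul]
    ring
  have hnorm {Λ : MvPolynomial σ R →ₗ[R] R} (h : IsSphericalAverage s Λ) :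
      Λ (normSqPoly ^ s) = 1 := by
    rw [← one_mul (normSqPoly ^ s), h.map_mul_normSqPoly_pow, h.map_one]
  have hc : c₂ = c₁ := by
    simpa only [hnorm h₁, hnorm h₂, mul_one] using hker (isHomogeneous_normSqPoly_pow s)
  have hc_ne : c₁ ≠ 0 := by
    rintro rfl
    refine one_ne_zero ((hnorm h₁).symm.trans ?_)
    exact map_eq_zero_of_map_linearForm_pow_eq_zero (fun v => by rw [hc₁, zero_mul])
      (isHomogeneous_normSqPoly_pow s)
  exact mul_left_cancel₀ hc_ne (hc ▸ hker hp)

lemma map_eq_of_isHomogeneous (h₁ : IsSphericalAverage s Λ₁) (h₂ : IsSphericalAverage s Λ₂)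
    {m : ℕ} (hm : m ≤ 2 * s + 1) {p : MvPolynomial σ R} (hp : p.IsHomogeneous m) :
    Λ₁ p = Λ₂ p := by
  rcases m.even_or_odd with ⟨k, rfl⟩ | hodd
  · have hdeg : k + k + 2 * (s - k) = 2 * s := by lia
    rw [← h₁.map_mul_normSqPoly_pow p (s - k), ← h₂.map_mul_normSqPoly_pow p (s - k)]
    exact h₁.map_eq_of_isHomogeneous_two_mul h₂
      (hdeg ▸ hp.mul (isHomogeneous_normSqPoly_pow (s - k)))
  · rw [h₁.map_odd hodd hp, h₂.map_odd hodd hp]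

theorem map_eq_of_totalDegree_le (h₁ : IsSphericalAverage s Λ₁) (h₂ : IsSphericalAverage s Λ₂)
    {p : MvPolynomial σ R} (hp : p.totalDegree ≤ 2 * s + 1) : Λ₁ p = Λ₂ p := by
  rw [← sum_homogeneousComponent p, map_sum, map_sum]
  refine sum_congr rfl fun m hm => h₁.map_eq_of_isHomogeneous h₂ ?_
    (homogeneousComponent_isHomogeneous m p)
  have := mem_range.mp hm
  lia

end IsSphericalAverage

end SphericalFunctional

/-! ### The uniform measure on the sphere and Venkov's criterion -/

section SphereMeasure

open Metric
open scoped Pointwise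

section General

variable {F : Type*} [NormedAddCommGroup F] [NormedSpace ℝ F]

/-- The self-homeomorphism of the unit sphere induced by a linear isometry. -/
def sphereHomeomorph (g : F ≃ₗᵢ[ℝ] F) : sphere (0 : F) 1 ≃ₜ sphere (0 : F) 1 :=
  g.toHomeomorph.subtype fun x => by simp

lemma image_coe_preimage_sphereHomeomorph (g : F ≃ₗᵢ[ℝ] F) (S : Set (sphere (0 : F) 1)) :
    (↑) '' (sphereHomeomorph g ⁻¹' S) = g ⁻¹' ((↑) '' S : Set F) := by
  ext x
  constructor
  · rintro ⟨ξ, hξ, rfl⟩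
    exact ⟨_, hξ, rfl⟩
  · rintro ⟨ξ, hξ, hx⟩
    have hx_mem : x ∈ sphere (0 : F) 1 := by simp [← g.norm_map x, ← hx]
    have hgx : sphereHomeomorph g ⟨x, hx_mem⟩ = ξ := Subtype.ext hx.symm
    exact ⟨⟨x, hx_mem⟩, Set.mem_preimage.mpr (hgx ▸ hξ), rfl⟩

lemma measurePreserving_sphereHomeomorph [FiniteDimensional ℝ F] [MeasurableSpace F] [BorelSpace F]
    {μ : Measure F} {g : F ≃ₗᵢ[ℝ] F} (hg : MeasurePreserving g μ μ) :
    MeasurePreserving (sphereHomeomorph g) μ.toSphere μ.toSphere := by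
  refine ⟨(sphereHomeomorph g).measurable, Measure.ext fun S hS => ?_⟩
  have hmeas := (sphereHomeomorph g).measurable hS
  have hcone : Set.Ioo (0 : ℝ) 1 • ((↑) '' (sphereHomeomorph g ⁻¹' S) : Set F)
      = g ⁻¹' (Set.Ioo (0 : ℝ) 1 • ((↑) '' S : Set F)) := by
    rw [image_coe_preimage_sphereHomeomorph]
    ext x
    constructor
    · rintro ⟨r, hr, y, hy, rfl⟩
      exact ⟨r, hr, g y, hy, (map_smul g r y).symm⟩
    · rintro ⟨r, hr, y, hy, hx⟩
      exact ⟨r, hr, g.symm y, by simpa using hy, g.injective (by simpa using hx)⟩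
  rw [Measure.map_apply (sphereHomeomorph g).measurable hS, Measure.toSphere_apply' _ hmeas,
    Measure.toSphere_apply' _ hS, hcone,
    hg.measure_preimage_emb g.toHomeomorph.measurableEmbedding]

end General

instance : IsProbabilityMeasure sphereUniform := by
  constructor
  rw [sphereUniform, Measure.smul_apply, smul_eq_mul]
  refine ENNReal.inv_mul_cancel ?_ (measure_ne_top _ _)
  rw [Ne, Measure.measure_univ_eq_zero]
  exact Measure.toSphere_ne_zero _

lemma integral_comp_linearIsometryEquiv (g : E 16 ≃ₗᵢ[ℝ] E 16) (f : E 16 → ℝ) :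
    ∫ ξ : sphere (0 : E 16) 1, f (g ξ) ∂sphereUniform
      = ∫ ξ : sphere (0 : E 16) 1, f ξ ∂sphereUniform :=
  ((measurePreserving_sphereHomeomorph g.measurePreserving).smul_measure _).integral_comp
    (sphereHomeomorph g).measurableEmbedding fun ξ => f ξ

lemma integral_inner_eq_of_norm_eq {v w : E 16} (h : ‖v‖ = ‖w‖) (f : ℝ → ℝ) :
    ∫ ξ : sphere (0 : E 16) 1, f ⟪v, (ξ : E 16)⟫ ∂sphereUniform
      = ∫ ξ : sphere (0 : E 16) 1, f ⟪w, (ξ : E 16)⟫ ∂sphereUniform := by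
  let ρ := (ℝ ∙ (v - w))ᗮ.reflection
  have hρ (ξ : E 16) : ⟪w, ρ ξ⟫ = ⟪v, ξ⟫ := by
    rw [← ρ.inner_map_map v ξ, Submodule.reflection_sub h]
  simpa only [hρ] using (integral_comp_linearIsometryEquiv ρ fun x => f ⟪w, x⟫)

lemma integral_inner_pow (v : E 16) (m : ℕ) :
    ∫ ξ : sphere (0 : E 16) 1, ⟪v, (ξ : E 16)⟫ ^ m ∂sphereUniform
      = ‖v‖ ^ m * ∫ ξ : sphere (0 : E 16) 1, ⟪εv 0, (ξ : E 16)⟫ ^ m ∂sphereUniform := by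
  have h : ‖v‖ = ‖‖v‖ • (εv 0 : E 16)‖ := by simp [norm_smul, εv]
  rw [integral_inner_eq_of_norm_eq h fun t => t ^ m, ← integral_const_mul]
  simp only [real_inner_smul_left, mul_pow]

end SphereMeasure

section SphereAverage

open MvPolynomial Finset

lemma integrable_eval_sphereUniform (p : MvPolynomial (Fin 16) ℝ) :
    Integrable (fun ξ : Metric.sphere (0 : E 16) 1 => eval (fun i => (ξ : E 16) i) p)
      sphereUniform :=
  Continuous.integrable_of_hasCompactSupport
    ((continuous_eval p).comp (by fun_prop)) (HasCompactSupport.of_compactSpace _)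

/-- Averaging of polynomials over the unit sphere. -/
def sphereAverage : MvPolynomial (Fin 16) ℝ →ₗ[ℝ] ℝ where
  toFun p := ∫ ξ, eval (fun i => (ξ : E 16) i) p ∂sphereUniform
  map_add' p q := by
    simp only [map_add]
    exact integral_add (integrable_eval_sphereUniform p) (integrable_eval_sphereUniform q)
  map_smul' c p := by
    simp only [smul_eval, RingHom.id_apply, smul_eq_mul]
    exact integral_const_mul _ _

lemma eval_linearForm_eq_inner {n : ℕ} (v : Fin n → ℝ) (x : E n) :
    eval (fun i => x i) (linearForm v) = ⟪vec v, x⟫ := by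
  simp [eval_linearForm, vec, PiLp.inner_apply, mul_comm]

lemma norm_vec_sq {n : ℕ} (v : Fin n → ℝ) : ‖vec v‖ ^ 2 = ∑ i, v i ^ 2 := by
  rw [EuclideanSpace.real_norm_sq_eq]
  rfl

lemma eval_normSqPoly_eq_norm_sq {n : ℕ} (x : E n) :
    eval (fun i => x i) normSqPoly = ‖x‖ ^ 2 := by
  rw [eval_normSqPoly, EuclideanSpace.real_norm_sq_eq]

lemma eval_neg_of_isHomogeneous {n m : ℕ} {p : MvPolynomial (Fin n) ℝ} (hm : Odd m)
    (hp : p.IsHomogeneous m) (x : E n) :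
    eval (fun i => (-x) i) p = -eval (fun i => x i) p := by
  simpa [hm.neg_one_pow, Pi.neg_def] using eval_smul_of_isHomogeneous hp (-1) fun i => x i

lemma isSphericalAverage_sphereAverage (s : ℕ) : IsSphericalAverage s sphereAverage where
  map_one := by simp [sphereAverage]
  map_mul_normSqPoly p := by
    simp [sphereAverage, eval_normSqPoly_eq_norm_sq]
  map_odd m hm p hp := by
    have h := integral_comp_linearIsometryEquiv (.neg ℝ) fun x => eval (fun i => x i) p
    simp only [LinearIsometryEquiv.coe_neg, eval_neg_of_isHomogeneous hm hp, integral_neg] at h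
    exact self_eq_neg.mp h.symm
  exists_map_linearForm_pow := by
    refine ⟨∫ ξ, ⟪εv 0, (ξ : E 16)⟫ ^ (2 * s) ∂sphereUniform, fun v => ?_⟩
    simp only [sphereAverage, LinearMap.coe_mk, AddHom.coe_mk, map_pow, eval_linearForm_eq_inner]
    rw [integral_inner_pow, pow_mul, norm_vec_sq, mul_comm]

theorem isSphericalDesign_of_sum_inner_pow {X : Finset (E 16)} (hX : X.Nonempty)
    (hnorm : ∀ x ∈ X, ‖x‖ = 1) (hneg : ∀ x ∈ X, -x ∈ X) {s : ℕ} {c : ℝ}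
    (hpow : ∀ v, ∑ x ∈ X, ⟪v, x⟫ ^ (2 * s) = c * ‖v‖ ^ (2 * s)) :
    IsSphericalDesign X (2 * s + 1) := by
  let Λ : MvPolynomial (Fin 16) ℝ →ₗ[ℝ] ℝ := (#X : ℝ)⁻¹ • evalSum X fun x i => x i
  have hΛ (p) : Λ p = (#X : ℝ)⁻¹ * ∑ x ∈ X, eval (fun i => x i) p := by simp [Λ, evalSum_apply]
  have hcard : (#X : ℝ) ≠ 0 := by simpa using hX.ne_empty
  have hspherical : IsSphericalAverage s Λ :=
    { map_one := by simp [hΛ, hcard]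
      map_mul_normSqPoly p := by
        rw [hΛ, hΛ, sum_congr rfl fun x hx => ?_]
        rw [map_mul, eval_normSqPoly_eq_norm_sq, hnorm x hx, one_pow, mul_one]
      map_odd m hm p hp := by
        rw [hΛ, mul_eq_zero, or_iff_right (inv_ne_zero hcard), ← self_eq_neg, ← sum_neg_distrib]
        refine sum_equiv (Equiv.neg _) (fun x => ?_) fun x _ => ?_
        · exact ⟨hneg x, fun h => neg_neg x ▸ hneg (-x) h⟩
        · rw [Equiv.neg_apply, eval_neg_of_isHomogeneous hm hp, neg_neg]
      exists_map_linearForm_pow := by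
        refine ⟨(#X : ℝ)⁻¹ * c, fun v => ?_⟩
        simp only [hΛ, map_pow, eval_linearForm_eq_inner, hpow]
        rw [pow_mul, norm_vec_sq, mul_assoc] }
  intro p hp
  rw [finsum_mem_coe_finset, Set.ncard_coe_finset, div_eq_inv_mul, ← hΛ,
    hspherical.map_eq_of_totalDegree_le (isSphericalAverage_sphereAverage s) hp]
  rfl

end SphereAverage

/-! ### Affine planes over `𝔽₂` and the extended Hamming code -/

section BinaryAffineGeometry

open Finset
open scoped Nat

variable {ι V : Type*} [AddCommGroup V]

lemma symm_sum_notMem [Module (ZMod 2) V] {v : ι ≃ V} {U : Finset ι} (hU : #U = 3) :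
    v.symm (∑ i ∈ U, v i) ∉ U := by
  classical
  intro hmem
  obtain ⟨j, k, hjk, hjkU⟩ := card_eq_two.mp
    (show #(U.erase (v.symm (∑ i ∈ U, v i))) = 2 by rw [card_erase_of_mem hmem, hU])
  have hsum := add_sum_erase U v hmem
  rw [v.apply_symm_apply, hjkU, sum_pair hjk, add_eq_left] at hsum
  exact hjk (v.injective (by rwa [← sub_eq_zero, ZModModule.sub_eq_add]))

variable [Fintype ι]

/-- The affine planes of a vector space over `𝔽₂`, as sets of labels of points: four distinct
points form a plane if and only if their sum vanishes. -/
def affinePlanes [DecidableEq V] (v : ι ≃ V) : Finset (Finset ι) :=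
  {T | #T = 4 ∧ ∑ i ∈ T, v i = 0}

lemma mem_affinePlanes [DecidableEq V] {v : ι ≃ V} {T : Finset ι} :
    T ∈ affinePlanes v ↔ #T = 4 ∧ ∑ i ∈ T, v i = 0 := by
  simp [affinePlanes]

variable [Module (ZMod 2) V]

/-- The extended Hamming code: the dual of the first-order Reed–Muller code, consisting of the
words that are orthogonal to all affine functions of the points `v i`. -/
def extendedHammingCode (v : ι → V) : Submodule (ZMod 2) (ι → ZMod 2) :=
  LinearMap.ker (Fintype.linearCombination (ZMod 2) fun i => ((1 : ZMod 2), v i))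

lemma mem_extendedHammingCode {v : ι → V} {b : ι → ZMod 2} :
    b ∈ extendedHammingCode v ↔ ∑ i, b i = 0 ∧ ∑ i, b i • v i = 0 := by
  simp [extendedHammingCode, Fintype.linearCombination_apply, Prod.ext_iff, Prod.fst_sum,
    Prod.snd_sum]

/-- The parity checks are independent on the origin and the standard basis. -/
lemma eq_zero_of_mem_extendedHammingCode {κ : Type*} [DecidableEq κ] {v : ι → κ → ZMod 2}
    (hv : Function.Injective v) {b : ι → ZMod 2} (hb : b ∈ extendedHammingCode v)
    (hsupp : ∀ i, b i ≠ 0 → v i = 0 ∨ ∃ j, v i = Pi.single j 1) : b = 0 := by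
  obtain ⟨hsum, hsumv⟩ := mem_extendedHammingCode.mp hb
  have hbasis {i : ι} {j : κ} (hij : v i = Pi.single j 1) : b i = 0 := by
    have hj := congrFun hsumv j
    rw [Finset.sum_apply, sum_eq_single i (fun k _ hki => ?_) (by simp)] at hj
    · simpa [hij] using hj
    by_contra hk
    rcases hsupp k (left_ne_zero_of_mul hk) with h0 | ⟨l, hl⟩
    · simp [h0] at hk
    · obtain rfl : j = l := by
        by_contra hjl
        simp [hl, hjl] at hk
      exact hki (hv (hl.trans hij.symm))
  have horigin {i : ι} (hi : v i = 0) : b i = 0 := by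
    rwa [sum_eq_single i (fun k _ hki => ?_) (by simp)] at hsum
    by_contra hk
    rcases hsupp k hk with h0 | ⟨l, hl⟩
    · exact hki (hv (h0.trans hi.symm))
    · exact hk (hbasis hl)
  funext i
  by_contra hi
  exact (hsupp i hi).elim (fun h => hi (horigin h)) fun ⟨_, h⟩ => hi (hbasis h)

lemma finrank_extendedHammingCode [FiniteDimensional (ZMod 2) V] {v : ι → V}
    (hv : Function.Surjective v) :
    Module.finrank (ZMod 2) (extendedHammingCode v) + (Module.finrank (ZMod 2) V + 1)
      = Fintype.card ι := by
  let parityCheck := Fintype.linearCombination (ZMod 2) fun i => ((1 : ZMod 2), v i)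
  have hsurj : LinearMap.range parityCheck = ⊤ := by
    rw [Fintype.range_linearCombination, eq_top_iff]
    rintro ⟨t, x⟩ -
    have hmem (y : V) :
        ((1 : ZMod 2), y) ∈ Submodule.span (ZMod 2) (Set.range fun i => (1, v i)) := by
      obtain ⟨i, rfl⟩ := hv y
      exact Submodule.subset_span ⟨i, rfl⟩
    have hdecomp : (t, x) = (1, x) + (t - 1) • ((1 : ZMod 2), (0 : V)) := by ext <;> simp
    rw [hdecomp]
    exact add_mem (hmem x) (Submodule.smul_mem _ _ (hmem 0))
  calc Module.finrank (ZMod 2) (extendedHammingCode v) + (Module.finrank (ZMod 2) V + 1)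
      = Module.finrank (ZMod 2) (LinearMap.range parityCheck)
          + Module.finrank (ZMod 2) (LinearMap.ker parityCheck) := by
        rw [hsurj, finrank_top, Module.finrank_prod, Module.finrank_self, add_comm 1, add_comm]
        rfl
    _ = Fintype.card ι := by
        rw [LinearMap.finrank_range_add_finrank_ker, Module.finrank_fintype_fun_eq_card]

section Incidence

variable [DecidableEq ι]

lemma indicator_mem_extendedHammingCode_iff {v : ι → V} {T : Finset ι} :
    (fun i => if i ∈ T then 1 else 0) ∈ extendedHammingCode v
      ↔ (#T : ZMod 2) = 0 ∧ ∑ i ∈ T, v i = 0 := by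
  simp [mem_extendedHammingCode]

lemma sum_card_filter_insert_subset {B : Finset (Finset ι)} {k : ℕ} (hB : ∀ T ∈ B, #T = k)
    (U : Finset ι) :
    ∑ a ∈ Uᶜ, #{T ∈ B | insert a U ⊆ T} = (k - #U) * #{T ∈ B | U ⊆ T} := by
  calc ∑ a ∈ Uᶜ, #{T ∈ B | insert a U ⊆ T}
      = ∑ a ∈ Uᶜ, #{T ∈ {T ∈ B | U ⊆ T} | a ∈ T} := by
        simp only [filter_filter, insert_subset_iff, and_comm]
    _ = ∑ T ∈ B with U ⊆ T, #{a ∈ Uᶜ | a ∈ T} :=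
        sum_card_bipartiteAbove_eq_sum_card_bipartiteBelow _
    _ = ∑ T ∈ B with U ⊆ T, (k - #U) := by
        refine sum_congr rfl fun T hT => ?_
        obtain ⟨hTB, hUT⟩ := mem_filter.mp hT
        rw [← hB T hTB, ← card_sdiff_of_subset hUT]
        congr 1
        ext a
        simp [and_comm]
    _ = (k - #U) * #{T ∈ B | U ⊆ T} := by rw [sum_const, smul_eq_mul, mul_comm]

variable [DecidableEq V] {v : ι ≃ V}

lemma insert_mem_affinePlanes_iff {U : Finset ι} (hU : #U = 3) {a : ι} (ha : a ∉ U) :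
    insert a U ∈ affinePlanes v ↔ a = v.symm (∑ i ∈ U, v i) := by
  rw [mem_affinePlanes, card_insert_of_notMem ha, sum_insert ha, Equiv.eq_symm_apply,
    ← ZModModule.sub_eq_add, sub_eq_zero, hU, and_iff_right rfl]

lemma insert_symm_sum_mem_affinePlanes {U : Finset ι} (hU : #U = 3) :
    insert (v.symm (∑ i ∈ U, v i)) U ∈ affinePlanes v :=
  (insert_mem_affinePlanes_iff hU (symm_sum_notMem hU)).mpr rfl

lemma card_affinePlanes_superset_of_card_eq_three {U : Finset ι} (hU : #U = 3) :
    #{T ∈ affinePlanes v | U ⊆ T} = 1 := by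
  refine card_eq_one.mpr ⟨insert (v.symm (∑ i ∈ U, v i)) U, ?_⟩
  ext T
  rw [mem_filter, mem_singleton]
  constructor
  · rintro ⟨hT, hUT⟩
    obtain ⟨a, haT, haU⟩ := exists_mem_notMem_of_card_lt_card
      (show #U < #T by rw [hU, (mem_affinePlanes.mp hT).1]; simp)
    have hins : insert a U = T := eq_of_subset_of_card_le (insert_subset haT hUT)
      (by rw [card_insert_of_notMem haU, hU, (mem_affinePlanes.mp hT).1])
    rw [← hins] at hT ⊢
    rw [(insert_mem_affinePlanes_iff hU haU).mp hT]
  · rintro rfl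
    exact ⟨insert_symm_sum_mem_affinePlanes hU, subset_insert _ _⟩

lemma factorial_mul_card_affinePlanes_superset {k : ℕ} {U : Finset ι} (hU : #U + k = 3) :
    (k + 1)! * #{T ∈ affinePlanes v | U ⊆ T} = (Fintype.card ι - #U).descFactorial k := by
  induction k generalizing U with
  | zero => simp [card_affinePlanes_superset_of_card_eq_three hU]
  | succ k ih =>
    have hcount := sum_card_filter_insert_subset (B := affinePlanes v)
      (fun T hT => (mem_affinePlanes.mp hT).1) U
    have hk : 4 - #U = k + 2 := by lia
    rw [hk] at hcount
    have hins (a : ι) (ha : a ∈ Uᶜ) : (k + 1)! * #{T ∈ affinePlanes v | insert a U ⊆ T}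
        = (Fintype.card ι - #U - 1).descFactorial k := by
      have hcard := card_insert_of_notMem (mem_compl.mp ha)
      rw [ih (by lia), hcard, Nat.sub_add_eq]
    rw [Nat.factorial_succ, mul_comm (k + 1 + 1), mul_assoc, ← hcount, mul_sum,
      sum_congr rfl hins, sum_const, card_compl, smul_eq_mul]
    cases Fintype.card ι - #U with
    | zero => simp
    | succ n => rw [Nat.succ_descFactorial_succ, Nat.add_sub_cancel]

end Incidence

/-- If `f a = 1` and `f b = 0`, then translation by `v a + v b` maps the zeros of `f` to
nonzeros. -/
lemma card_le_two_mul_card_support [DecidableEq V] {v : ι ≃ V} {f : ι → ZMod 2}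
    (hf : ∀ T ∈ affinePlanes v, ∑ i ∈ T, f i = 0) (hf0 : f ≠ 0) :
    Fintype.card ι ≤ 2 * #{i | f i ≠ 0} := by
  classical
  obtain ⟨a, ha⟩ := Function.ne_iff.mp hf0
  have htotal : #{i | f i = 0} + #{i | f i ≠ 0} = Fintype.card ι :=
    card_filter_add_card_filter_not _
  suffices hle : #{i | f i = 0} ≤ #{i | f i ≠ 0} by lia
  by_cases hb : ∃ b, f b = 0
  swap
  · simp [filter_false_of_mem fun i _ => not_exists.mp hb i]
  obtain ⟨b, hb⟩ := hb
  refine card_le_card_of_injOn (fun x => v.symm (v x + v a + v b)) (fun x hx => ?_)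
    fun x _ y _ hxy => by simpa using hxy
  simp only [coe_filter, mem_univ, true_and, Set.mem_ofPred_eq] at hx ⊢
  rcases eq_or_ne x b with rfl | hxb
  · rwa [add_right_comm, ZModModule.add_self, zero_add, v.symm_apply_apply]
  have hxa : x ≠ a := by rintro rfl; exact ha hx
  have hab : a ≠ b := by rintro rfl; exact ha hb
  have hU : #{x, a, b} = 3 := card_eq_three.mpr ⟨x, a, b, hxa, hxb, hab, rfl⟩
  have hsum := hf _ (insert_symm_sum_mem_affinePlanes (v := v) hU)
  rw [sum_insert (symm_sum_notMem hU)] at hsum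
  simp only [sum_insert, mem_insert, mem_singleton, hxa, hxb, hab, or_self, not_false_eq_true,
    sum_singleton, hx, hb, zero_add, add_zero, ← add_assoc] at hsum
  intro hzero
  rw [hzero, zero_add] at hsum
  exact ha hsum

end BinaryAffineGeometry

/-! ### Coordinates of the Barnes–Wall lattice -/

section BarnesWall

open Finset

/-- Construction A: the integer vectors whose reductions modulo 2 lie in the code `C`. -/
def constructionA {ι : Type*} (C : Submodule (ZMod 2) (ι → ZMod 2)) : Submodule ℤ (ι → ℤ) :=
  (C.toAddSubgroup.comap ((Int.castAddHom (ZMod 2)).compLeft ι)).toIntSubmodule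

lemma mem_constructionA {ι : Type*} {C : Submodule (ZMod 2) (ι → ZMod 2)} {c : ι → ℤ} :
    c ∈ constructionA C ↔ (fun i => (c i : ZMod 2)) ∈ C := Iff.rfl

lemma constructionA_congr {ι : Type*} {C : Submodule (ZMod 2) (ι → ZMod 2)} {c d : ι → ℤ}
    (h : ∀ i, (c i : ZMod 2) = d i) : c ∈ constructionA C ↔ d ∈ constructionA C := by
  rw [mem_constructionA, mem_constructionA, funext h]

/-- The labelling of the coordinates of `ℝ¹⁶` by `𝔽₂⁴` through binary digits. -/
def bits : Fin 16 ≃ (Fin 4 → ZMod 2) := (finFunctionFinEquiv (m := 2) (n := 4)).symm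

/-- The extended Hamming code of length 16. -/
abbrev hammingCode16 : Submodule (ZMod 2) (Fin 16 → ZMod 2) := extendedHammingCode bits

/-- `intVec` as a homomorphism. -/
def intVecHom (n : ℕ) : (Fin n → ℤ) →ₗ[ℤ] E n where
  toFun := intVec
  map_add' c d := by ext i; simp [intVec]
  map_smul' k c := by ext i; simp [intVec]

/-- The planes whose indicator vectors are `g1, …, g11`. -/
def generatorPlane : Fin 11 → Finset (Fin 16) :=
  ![{0, 4, 8, 12}, {0, 2, 4, 6}, {0, 2, 8, 10}, {0, 2, 12, 14}, {0, 1, 2, 3}, {0, 1, 4, 5},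
    {0, 1, 6, 7}, {0, 1, 8, 9}, {0, 1, 10, 11}, {0, 1, 12, 13}, {0, 1, 14, 15}]

lemma generatorPlane_mem_affinePlanes (j : Fin 11) : generatorPlane j ∈ affinePlanes bits := by
  rw [mem_affinePlanes]
  revert j
  decide

lemma intVec_piecewise {n : ℕ} (T : Finset (Fin n)) :
    intVec (T.piecewise 1 0) = ∑ i ∈ T, εv i := by
  ext i
  simp [intVec, εv, Finset.piecewise, Finset.sum_apply, Pi.single_apply]

lemma intVec_generatorPlane :
    (fun j => intVec ((generatorPlane j).piecewise 1 0))
      = ![g1, g2, g3, g4, g5, g6, g7, g8, g9, g10, g11] := by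
  funext j
  rw [intVec_piecewise]
  fin_cases j <;>
    simp [generatorPlane, g1, g2, g3, g4, g5, g6, g7, g8, g9, g10, g11, ← add_assoc]

/-- The signs of the coordinates of `f0`. -/
def f0Sign (i : Fin 16) : ℤ := if i = 0 ∨ i = 8 then -1 else 1

lemma f0_apply (i : Fin 16) : f0 i = f0Sign i / 2 := by
  fin_cases i <;> simp [f0, vec, f0Sign]

lemma two_smul_f0 : (2 : ℤ) • f0 = intVec f0Sign := by
  ext i
  simp [f0_apply, intVec, mul_div_cancel₀]

lemma piecewise_mem_constructionA {T : Finset (Fin 16)} :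
    T.piecewise 1 0 ∈ constructionA hammingCode16 ↔ (#T : ZMod 2) = 0 ∧ ∑ i ∈ T, bits i = 0 := by
  rw [← indicator_mem_extendedHammingCode_iff, mem_constructionA]
  simp [Finset.piecewise]

lemma plane_mem_constructionA {T : Finset (Fin 16)} (hT : T ∈ affinePlanes bits) :
    T.piecewise 1 0 ∈ constructionA hammingCode16 := by
  obtain ⟨hcard, hsum⟩ := mem_affinePlanes.mp hT
  exact piecewise_mem_constructionA.mpr ⟨by rw [hcard]; rfl, hsum⟩

lemma f0Sign_mem_constructionA : f0Sign ∈ constructionA hammingCode16 := by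
  rw [mem_constructionA]
  have : (fun i => (f0Sign i : ZMod 2))
      = fun i => if i ∈ (univ : Finset (Fin 16)) then 1 else 0 := by
    decide
  rw [this, indicator_mem_extendedHammingCode_iff]
  decide

lemma BW16_eq_span : BW16 = Submodule.span ℤ ((Set.range fun i : Fin 16 => (2 : ℝ) • εv i) ∪
    insert f0 (Set.range fun j => intVec ((generatorPlane j).piecewise 1 0))) := by
  rw [BW16, intVec_generatorPlane]
  simp only [Matrix.range_cons, Matrix.range_empty, Set.union_empty, Set.singleton_union]

lemma intVec_two_mul {n : ℕ} (c : Fin n → ℤ) :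
    intVec (fun i => 2 * c i) = ∑ i, c i • (2 : ℝ) • (εv i : E n) := by
  ext j
  simp [intVec, εv, Pi.single_apply, mul_comm]

lemma two_mul_mem_constructionA {ι : Type*} {C : Submodule (ZMod 2) (ι → ZMod 2)} (c : ι → ℤ) :
    (fun i => 2 * c i) ∈ constructionA C := by
  have : (fun i => ((2 * c i : ℤ) : ZMod 2)) = 0 :=
    funext fun i => (ZMod.intCast_eq_zero_iff_even).mpr (even_two_mul _)
  exact mem_constructionA.mpr (this ▸ zero_mem _)

lemma BW16_le_sup :
    BW16 ≤ Submodule.span ℤ {f0} ⊔ (constructionA hammingCode16).map (intVecHom 16) := by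
  rw [BW16_eq_span]
  refine Submodule.span_le.mpr (Set.union_subset ?_ (Set.insert_subset ?_ ?_))
  · rintro _ ⟨i, rfl⟩
    refine Submodule.mem_sup_right ⟨_, two_mul_mem_constructionA (Pi.single i 1), ?_⟩
    exact (intVec_two_mul _).trans (by simp [Pi.single_apply])
  · exact Submodule.mem_sup_left (Submodule.mem_span_singleton_self _)
  · rintro _ ⟨j, rfl⟩
    exact Submodule.mem_sup_right (Submodule.mem_map_of_mem
      (plane_mem_constructionA (generatorPlane_mem_affinePlanes j)))

/-- Gaussian elimination: the planes `generatorPlane j` can be used to clear all coordinates other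
than those of the origin and of the standard basis. -/
lemma exists_sum_generatorPlane_eq (c : Fin 16 → ℤ) :
    ∃ a : Fin 11 → ℤ, ∀ i, (bits i ≠ 0 ∧ ∀ j, bits i ≠ Pi.single j 1) →
      (∑ j, a j • (generatorPlane j).piecewise 1 0 : Fin 16 → ℤ) i = c i := by
  refine ⟨![c 12 - c 13 - c 14 + c 15, c 6 - c 7, c 10 - c 11, c 14 - c 15, c 3, c 5, c 7, c 9,
    c 11, c 13, c 15], fun i hi => ?_⟩
  have hi' : i ∈ ({3, 5, 6, 7, 9, 10, 11, 12, 13, 14, 15} : Finset (Fin 16)) := by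
    revert i
    decide
  fin_cases hi' <;>
    simp [Fin.sum_univ_succ, generatorPlane, Finset.piecewise]
  ring

lemma exists_eq_sum_generatorPlane_add_two_mul {c : Fin 16 → ℤ}
    (hc : c ∈ constructionA hammingCode16) :
    ∃ (a : Fin 11 → ℤ) (d : Fin 16 → ℤ),
      c = ∑ j, a j • (generatorPlane j).piecewise 1 0 + fun i => 2 * d i := by
  obtain ⟨a, ha⟩ := exists_sum_generatorPlane_eq c
  set e : Fin 16 → ℤ := c - ∑ j, a j • (generatorPlane j).piecewise 1 0
  have he : e ∈ constructionA hammingCode16 := sub_mem hc <| sum_mem fun j _ =>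
    Submodule.smul_mem _ _ (plane_mem_constructionA (generatorPlane_mem_affinePlanes j))
  have hzero : (fun i => (e i : ZMod 2)) = 0 :=
    eq_zero_of_mem_extendedHammingCode bits.injective he fun i hi => by
      by_contra! hbits
      exact hi (by rw [show e i = 0 from sub_eq_zero.mpr (ha i hbits).symm, Int.cast_zero])
  have heven (i : Fin 16) : ∃ k, e i = 2 * k :=
    even_iff_exists_two_mul.mp (ZMod.intCast_eq_zero_iff_even.mp (congrFun hzero i))
  choose d hd using heven
  exact ⟨a, d, sub_eq_iff_eq_add'.mp (funext hd)⟩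

lemma intVec_mem_BW16 {c : Fin 16 → ℤ} (hc : c ∈ constructionA hammingCode16) :
    intVec c ∈ BW16 := by
  obtain ⟨a, d, rfl⟩ := exists_eq_sum_generatorPlane_add_two_mul hc
  change intVecHom 16 _ ∈ BW16
  rw [map_add, map_sum]
  refine add_mem (sum_mem fun j _ => ?_) ?_
  · rw [map_smul, BW16_eq_span]
    exact Submodule.smul_mem _ _ (Submodule.subset_span (.inr (.inr ⟨j, rfl⟩)))
  · change intVec _ ∈ BW16
    rw [intVec_two_mul, BW16_eq_span]
    exact sum_mem fun i _ => Submodule.smul_mem _ _ (Submodule.subset_span (.inl ⟨i, rfl⟩))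

lemma f0_mem_BW16 : f0 ∈ BW16 :=
  Submodule.subset_span (.inr (.inl rfl))

/-- Two cosets suffice because `2 • f0` lies in the Construction A lattice. -/
lemma mem_BW16 {x : E 16} : x ∈ BW16 ↔
    ∃ c ∈ constructionA hammingCode16, x = intVec c ∨ x = f0 + intVec c := by
  constructor
  · intro hx
    obtain ⟨_, hk, _, ⟨c, hc, rfl⟩, rfl⟩ := Submodule.mem_sup.mp (BW16_le_sup hx)
    obtain ⟨k, rfl⟩ := Submodule.mem_span_singleton.mp hk
    have hadd (m : ℤ) : m • f0Sign + c ∈ constructionA hammingCode16 :=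
      add_mem (Submodule.smul_mem _ m f0Sign_mem_constructionA) hc
    have hintVec (m : ℤ) : intVec (m • f0Sign + c) = (2 * m) • f0 + intVec c := by
      rw [mul_comm, mul_smul, two_smul_f0]
      exact ((intVecHom 16).map_add _ _).trans (by rw [map_smul]; rfl)
    rcases Int.even_or_odd' k with ⟨m, rfl | rfl⟩
    · exact ⟨_, hadd m, .inl (hintVec m).symm⟩
    · refine ⟨_, hadd m, .inr ?_⟩
      rw [hintVec, add_smul, one_smul, ← add_assoc, add_comm f0]
      rfl
  · rintro ⟨c, hc, rfl | rfl⟩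
    · exact intVec_mem_BW16 hc
    · exact add_mem f0_mem_BW16 (intVec_mem_BW16 hc)

lemma vec_mem_BW16 {x : Fin 16 → ℝ} : vec x ∈ BW16 ↔ ∃ c ∈ constructionA hammingCode16,
    (∀ i, x i = c i) ∨ ∀ i, x i = f0Sign i / 2 + c i := by
  simp only [mem_BW16, PiLp.ext_iff, PiLp.add_apply, f0_apply]
  rfl

lemma piecewise_neg_mem_constructionA {ι : Type*} [DecidableEq ι]
    {C : Submodule (ZMod 2) (ι → ZMod 2)} {c : ι → ℤ} (hc : c ∈ constructionA C) (T : Finset ι) :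
    T.piecewise (-c) c ∈ constructionA C := by
  refine (constructionA_congr fun i => ?_).mpr hc
  by_cases hi : i ∈ T <;> simp [hi, ZModModule.neg_eq_self]

lemma vec_piecewise_neg_mem_BW16 {T : Finset (Fin 16)} (hT : T ∈ affinePlanes bits)
    {x : Fin 16 → ℝ} (hx : vec x ∈ BW16) : vec (T.piecewise (-x) x) ∈ BW16 := by
  obtain ⟨c, hc, hx⟩ := vec_mem_BW16.mp hx
  refine vec_mem_BW16.mpr ?_
  rcases hx with hx | hx
  · refine ⟨_, piecewise_neg_mem_constructionA hc T, .inl fun i => ?_⟩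
    by_cases hi : i ∈ T <;> simp [hi, hx i]
  · have hflip : T.piecewise (-f0Sign) 0 ∈ constructionA hammingCode16 := by
      refine (constructionA_congr fun i => ?_).mpr (plane_mem_constructionA hT)
      by_cases hi : i ∈ T <;> by_cases h0 : i = 0 ∨ i = 8 <;> simp [hi, h0, f0Sign]
    refine ⟨_, add_mem hflip (piecewise_neg_mem_constructionA hc T), .inr fun i => ?_⟩
    by_cases hi : i ∈ T
    · simp only [piecewise_eq_of_mem, hi, Pi.add_apply, Pi.neg_apply, hx i]
      push_cast
      ring
    · simp [hi, hx i]

end BarnesWall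

/-! ### The minimal shell and its sixth moments -/

section MinimalShell

open Finset
open scoped Nat

section SignedVectors

variable {ι : Type*} [Fintype ι] [DecidableEq ι] {r : ℝ} {T : Finset ι} {x : ι → ℝ}

/-- The vectors with support `T` all of whose nonzero coordinates are `±r`. -/
def signedVectors (r : ℝ) (T : Finset ι) : Finset (ι → ℝ) :=
  Fintype.piFinset fun i => if i ∈ T then {r, -r} else {0}

lemma mem_signedVectors : x ∈ signedVectors r T ↔ ∀ i, x i ^ 2 = if i ∈ T then r ^ 2 else 0 := by
  refine Fintype.mem_piFinset.trans (forall_congr' fun i => ?_)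
  split_ifs <;> simp [sq_eq_sq_iff_eq_or_eq_neg]

lemma card_signedVectors (hr : r ≠ 0) (T : Finset ι) : #(signedVectors r T) = 2 ^ #T := by
  have hcard (i : ι) : #(if i ∈ T then {r, -r} else {0}) = if i ∈ T then 2 else 1 := by
    split_ifs
    · exact card_pair (self_ne_neg.mpr hr)
    · exact card_singleton 0
  simp only [signedVectors, Fintype.card_piFinset, hcard, prod_ite_mem, univ_inter, prod_const]

lemma mem_iff_ne_zero_of_mem_signedVectors (hr : r ≠ 0) (hx : x ∈ signedVectors r T) (i : ι) :
    i ∈ T ↔ x i ≠ 0 := by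
  have hi := mem_signedVectors.mp hx i
  split_ifs at hi with hiT
  · exact iff_of_true hiT (pow_ne_zero_iff two_ne_zero |>.mp (hi ▸ pow_ne_zero 2 hr))
  · exact iff_of_false hiT (not_not.mpr (pow_eq_zero_iff two_ne_zero |>.mp hi))

lemma disjoint_signedVectors {r' : ℝ} {T' : Finset ι} (hr : r ≠ 0) (hr' : r' ≠ 0) (hT : T ≠ T') :
    Disjoint (signedVectors r T) (signedVectors r' T') := by
  refine disjoint_left.mpr fun x hx hx' => hT (Finset.ext fun i => ?_)
  rw [mem_iff_ne_zero_of_mem_signedVectors hr hx, mem_iff_ne_zero_of_mem_signedVectors hr' hx']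

lemma sum_sq_of_mem_signedVectors (hx : x ∈ signedVectors r T) : ∑ i, x i ^ 2 = #T * r ^ 2 := by
  simp only [mem_signedVectors.mp hx, sum_ite_mem, univ_inter, sum_const, nsmul_eq_mul]

lemma prod_pow_two_mul_of_mem_signedVectors (hx : x ∈ signedVectors r T) (β : ι → ℕ) :
    ∏ i, x i ^ (2 * β i) = if ({i | β i ≠ 0} : Finset ι) ⊆ T then (r ^ 2) ^ ∑ i, β i else 0 := by
  simp only [pow_mul, mem_signedVectors.mp hx]
  split_ifs with hβ
  · rw [← prod_pow_eq_pow_sum]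
    refine prod_congr rfl fun i _ => ?_
    by_cases hi : β i = 0
    · simp [hi]
    · rw [if_pos (hβ (by simpa using hi))]
  · obtain ⟨i, hi, hiT⟩ := not_subset.mp hβ
    exact prod_eq_zero (mem_univ i) (by simpa [hiT] using hi)

lemma exists_int_of_mem_signedVectors {r : ℤ} (hx : x ∈ signedVectors (r : ℝ) T) :
    ∃ c : ι → ℤ, (∀ i, x i = c i) ∧ ∀ i, (c i : ZMod 2) = if i ∈ T then (r : ZMod 2) else 0 := by
  have hcoord (i : ι) :
      ∃ k : ℤ, x i = k ∧ (k : ZMod 2) = if i ∈ T then (r : ZMod 2) else 0 := by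
    have hi := mem_signedVectors.mp hx i
    split_ifs at hi ⊢
    · rcases sq_eq_sq_iff_eq_or_eq_neg.mp hi with h | h
      · exact ⟨r, h, rfl⟩
      · exact ⟨-r, by rw [h, Int.cast_neg], by rw [Int.cast_neg, ZModModule.neg_eq_self]⟩
    · exact ⟨0, by simpa using hi, Int.cast_zero⟩
  choose c hc using hcoord
  exact ⟨c, forall_and.mp hc⟩

end SignedVectors

/-- The coefficient vector `c`, reducing to `b` modulo 2, for which `f0 + c` is obtained from `f0`
by changing the signs where `b` is nonzero. -/
def signShift (b : Fin 16 → ZMod 2) (i : Fin 16) : ℤ := if b i = 0 then 0 else -f0Sign i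

/-- The vector obtained from `f0` by changing the signs where `b` is nonzero. -/
def spinVector (b : Fin 16 → ZMod 2) (i : Fin 16) : ℝ := f0Sign i / 2 + signShift b i

lemma f0Sign_eq_or (i : Fin 16) : f0Sign i = 1 ∨ f0Sign i = -1 :=
  (ite_eq_or_eq _ _ _).symm

lemma signShift_intCast (b : Fin 16 → ZMod 2) (i : Fin 16) : (signShift b i : ZMod 2) = b i := by
  unfold signShift
  split_ifs with h
  · simp [h]
  · have hb : b i = 1 := Fin.eq_one_of_ne_zero (b i) h
    rcases f0Sign_eq_or i with h | h <;> simp [h, hb]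

lemma spinVector_injective : Function.Injective spinVector := by
  intro b b' h
  funext i
  have hi : signShift b i = signShift b' i := by
    exact_mod_cast add_left_cancel (congrFun h i)
  rw [← signShift_intCast b i, hi, signShift_intCast]

lemma spinVector_mem_signedVectors (b : Fin 16 → ZMod 2) :
    spinVector b ∈ signedVectors (1 / 2) univ := by
  refine mem_signedVectors.mpr fun i => ?_
  rw [if_pos (mem_univ i), spinVector, signShift]
  rcases f0Sign_eq_or i with h | h <;> split_ifs <;> norm_num [h]

lemma signShift_apply_of_sq_eq_one {c : Fin 16 → ℤ} {i : Fin 16}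
    (hc : (f0Sign i + 2 * c i) ^ 2 = 1) : signShift (fun i => (c i : ZMod 2)) i = c i := by
  have hi : c i = 0 ∨ c i = -f0Sign i := by
    rcases f0Sign_eq_or i with h | h <;> rcases sq_eq_one_iff.mp hc with h' | h' <;> omega
  rcases hi with h | h <;> rcases f0Sign_eq_or i with h' | h' <;> simp [signShift, h, h']

lemma sq_eq_one_of_odd_of_sum_sq_eq_card {ι : Type*} [Fintype ι] {a : ι → ℤ}
    (hodd : ∀ i, Odd (a i)) (hsum : ∑ i, a i ^ 2 = Fintype.card ι) (i : ι) : a i ^ 2 = 1 := by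
  have hle (j : ι) (_ : j ∈ univ) : 1 ≤ a j ^ 2 :=
    Int.add_one_le_of_lt (sq_pos_of_ne_zero fun h => Int.not_odd_zero (h ▸ hodd j))
  refine ((sum_eq_sum_iff_of_le hle).mp ?_ i (mem_univ i)).symm
  simp [hsum]

lemma exists_support_of_sum_sq_eq_four {ι : Type*} [Fintype ι] [DecidableEq ι] {c : ι → ℤ}
    (hc : ∑ i, c i ^ 2 = 4) : (∃ i, ∀ j, c j ^ 2 = if j ∈ ({i} : Finset ι) then 4 else 0) ∨
      ∃ T : Finset ι, #T = 4 ∧ ∀ j, c j ^ 2 = if j ∈ T then 1 else 0 := by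
  by_cases hbig : ∃ i, 4 ≤ c i ^ 2
  · obtain ⟨i, hi⟩ := hbig
    have hsplit : c i ^ 2 + ∑ j ∈ univ.erase i, c j ^ 2 = ∑ j, c j ^ 2 :=
      add_sum_erase univ (fun j => c j ^ 2) (mem_univ i)
    have hnonneg (j : ι) (_ : j ∈ univ.erase i) : 0 ≤ c j ^ 2 := sq_nonneg _
    have hrest : ∑ j ∈ univ.erase i, c j ^ 2 = 0 :=
      le_antisymm (by linarith) (sum_nonneg hnonneg)
    refine .inl ⟨i, fun j => ?_⟩
    split_ifs with hj
    · rw [mem_singleton.mp hj]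
      linarith
    · exact (sum_eq_zero_iff_of_nonneg hnonneg).mp hrest j (by simpa using hj)
  · push Not at hbig
    have hsq (j : ι) : c j ^ 2 = if j ∈ ({i | c i ≠ 0} : Finset ι) then 1 else 0 := by
      have hlt : -2 < c j ∧ c j < 2 := abs_lt.mp (abs_lt_of_sq_lt_sq (hbig j) zero_le_two)
      rcases hlt with ⟨hl, hr⟩
      interval_cases h : c j <;> simp [h]
    refine .inr ⟨_, ?_, hsq⟩
    simp only [hsq, sum_boole, filter_mem_eq_inter, univ_inter] at hc
    exact_mod_cast hc

open scoped Classical in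
/-- The codewords of the extended Hamming code, as a `Finset`. -/
def codewords : Finset (Fin 16 → ZMod 2) := {b | b ∈ hammingCode16}

lemma mem_codewords {b : Fin 16 → ZMod 2} : b ∈ codewords ↔ b ∈ hammingCode16 := by
  simp [codewords]

/-- The coordinates of the minimal vectors of `BW16`: the `±2εᵢ`, the `±εᵢ±εⱼ±εₖ±εₗ` supported on
a plane, and the vectors obtained from `f0` by changing the signs on a codeword. -/
def minimalShell : Finset (Fin 16 → ℝ) :=
  (univ.biUnion fun i => signedVectors 2 {i}) ∪ (affinePlanes bits).biUnion (signedVectors 1) ∪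
    codewords.image spinVector

lemma sum_minimalShell {M : Type*} [AddCommMonoid M] (f : (Fin 16 → ℝ) → M) :
    ∑ x ∈ minimalShell, f x = ∑ i, ∑ x ∈ signedVectors 2 {i}, f x +
      ∑ T ∈ affinePlanes bits, ∑ x ∈ signedVectors 1 T, f x +
        ∑ b ∈ codewords, f (spinVector b) := by
  have hdisj {r r' : ℝ} {T T' : Finset (Fin 16)} (hr : r ≠ 0) (hr' : r' ≠ 0) (h : #T ≠ #T') :
      Disjoint (signedVectors r T) (signedVectors r' T') :=
    disjoint_signedVectors hr hr' fun hT => h (by rw [hT])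
  rw [minimalShell, sum_union, sum_union, sum_biUnion, sum_biUnion,
    sum_image spinVector_injective.injOn]
  · exact fun T _ T' _ => disjoint_signedVectors one_ne_zero one_ne_zero
  · exact fun i _ j _ hij =>
      disjoint_signedVectors two_ne_zero two_ne_zero (singleton_injective.ne hij)
  · simp only [disjoint_biUnion_left, disjoint_biUnion_right]
    refine fun T hT i _ => hdisj two_ne_zero one_ne_zero ?_
    simp [(mem_affinePlanes.mp hT).1]
  · simp only [disjoint_union_left, disjoint_biUnion_left]
    have hspin {r : ℝ} {T : Finset (Fin 16)} (hr : r ≠ 0) (hT : #T ≠ 16) :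
        Disjoint (signedVectors r T) (codewords.image spinVector) := by
      refine (hdisj (T' := univ) hr one_half_pos.ne' hT).mono_right ?_
      exact image_subset_iff.mpr fun b _ => spinVector_mem_signedVectors b
    refine ⟨fun i _ => hspin two_ne_zero (by simp), fun T hT => hspin one_ne_zero ?_⟩
    simp [(mem_affinePlanes.mp hT).1]

lemma card_codewords : #codewords = 2048 := by
  have hdim := finrank_extendedHammingCode bits.surjective
  rw [Module.finrank_fin_fun, Fintype.card_fin] at hdim
  have hrank : Module.finrank (ZMod 2) hammingCode16 = 11 := Nat.add_right_cancel hdim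
  classical
  rw [codewords, ← Fintype.card_subtype, ← Nat.card_eq_fintype_card]
  change Nat.card hammingCode16 = 2048
  rw [Module.natCard_eq_pow_finrank (K := ZMod 2), hrank, Nat.card_zmod]
  norm_num

lemma card_affinePlanes_bits_superset {S : Finset (Fin 16)} {k : ℕ} (hS : #S + k = 3) :
    #{T ∈ affinePlanes bits | S ⊆ T} = (13 + k).descFactorial k / (k + 1)! := by
  have h := factorial_mul_card_affinePlanes_superset (v := bits) hS
  rw [Fintype.card_fin, show 16 - #S = 13 + k by omega] at h
  exact Nat.eq_div_of_mul_eq_right (Nat.factorial_ne_zero _) h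

lemma card_affinePlanes_bits : #(affinePlanes bits) = 140 := by
  simpa [Nat.factorial] using card_affinePlanes_bits_superset (S := ∅) (k := 3) rfl

lemma card_minimalShell : #minimalShell = 4320 := by
  have hplanes : ∑ T ∈ affinePlanes bits, (#(signedVectors (1 : ℝ) T) : ℝ) = 140 * 16 := by
    rw [sum_congr rfl fun T hT => by
      rw [card_signedVectors one_ne_zero, (mem_affinePlanes.mp hT).1]]
    simp only [sum_const, card_affinePlanes_bits]
    norm_num
  have hcard : (#minimalShell : ℝ) = 4320 := by
    rw [cast_card, sum_minimalShell]
    simp only [← cast_card, hplanes, card_signedVectors two_ne_zero, card_singleton, card_codewords]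
    norm_num
  exact_mod_cast hcard

lemma mem_minimalShell_iff {x : Fin 16 → ℝ} : x ∈ minimalShell ↔
    (∃ i, x ∈ signedVectors 2 {i}) ∨ (∃ T ∈ affinePlanes bits, x ∈ signedVectors 1 T) ∨
      ∃ b ∈ hammingCode16, spinVector b = x := by
  simp [minimalShell, mem_codewords]

lemma vec_mem_BW16_of_mem_minimalShell {x : Fin 16 → ℝ} (hx : x ∈ minimalShell) :
    vec x ∈ BW16 := by
  rw [vec_mem_BW16]
  obtain ⟨i, hx⟩ | ⟨T, hT, hx⟩ | ⟨b, hb, rfl⟩ := mem_minimalShell_iff.mp hx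
  · obtain ⟨c, hxc, hc⟩ := exists_int_of_mem_signedVectors (r := 2) hx
    refine ⟨c, (constructionA_congr fun j => ?_).mpr (zero_mem _), .inl hxc⟩
    rw [hc, Pi.zero_apply, Int.cast_zero]
    exact ite_eq_right_iff.mpr fun _ => rfl
  · obtain ⟨c, hxc, hc⟩ := exists_int_of_mem_signedVectors (r := 1) (by simpa using hx)
    refine ⟨c, (constructionA_congr fun j => ?_).mpr (plane_mem_constructionA hT), .inl hxc⟩
    rw [hc]
    by_cases hj : j ∈ T <;> simp [hj]
  · refine ⟨signShift b, ?_, .inr fun i => rfl⟩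
    rwa [mem_constructionA, funext (signShift_intCast b)]

lemma sum_sq_of_mem_minimalShell {x : Fin 16 → ℝ} (hx : x ∈ minimalShell) :
    ∑ i, x i ^ 2 = 4 := by
  obtain ⟨i, hx⟩ | ⟨T, hT, hx⟩ | ⟨b, -, rfl⟩ := mem_minimalShell_iff.mp hx
  · rw [sum_sq_of_mem_signedVectors hx, card_singleton]
    norm_num
  · rw [sum_sq_of_mem_signedVectors hx, (mem_affinePlanes.mp hT).1]
    norm_num
  · rw [sum_sq_of_mem_signedVectors (spinVector_mem_signedVectors b), card_univ, Fintype.card_fin]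
    norm_num

lemma intCast_mem_minimalShell {c : Fin 16 → ℤ} (hc : c ∈ constructionA hammingCode16)
    (hsum : ∑ i, c i ^ 2 = 4) : (fun i => (c i : ℝ)) ∈ minimalShell := by
  rw [mem_minimalShell_iff]
  obtain ⟨i, hi⟩ | ⟨T, hcard, hT⟩ := exists_support_of_sum_sq_eq_four hsum
  · refine .inl ⟨i, mem_signedVectors.mpr fun j => ?_⟩
    rw [← Int.cast_pow, hi, apply_ite (Int.cast : ℤ → ℝ)]
    norm_num
  · have hplane : T.piecewise 1 0 ∈ constructionA hammingCode16 := by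
      refine (constructionA_congr fun j => ?_).mp hc
      have hj : ((c j ^ 2 : ℤ) : ZMod 2) = c j := by simp
      rw [← hj, hT]
      rfl
    refine .inr (.inl ⟨T, ?_, mem_signedVectors.mpr fun j => ?_⟩)
    · exact mem_affinePlanes.mpr ⟨hcard, (piecewise_mem_constructionA.mp hplane).2⟩
    · rw [← Int.cast_pow, hT, apply_ite (Int.cast : ℤ → ℝ)]
      norm_num

lemma f0Sign_half_add_mem_minimalShell {c : Fin 16 → ℤ} (hc : c ∈ constructionA hammingCode16)
    (hsum : ∑ i, (f0Sign i + 2 * c i) ^ 2 = 16) :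
    (fun i => (f0Sign i / 2 + c i : ℝ)) ∈ minimalShell := by
  have hodd (i : Fin 16) : Odd (f0Sign i + 2 * c i) := by
    rcases f0Sign_eq_or i with h | h <;> exact Odd.add_even (by simp [h]) (even_two_mul _)
  refine mem_minimalShell_iff.mpr (.inr (.inr ⟨_, hc, funext fun i => ?_⟩))
  have hi := signShift_apply_of_sq_eq_one (sq_eq_one_of_odd_of_sum_sq_eq_card hodd hsum i)
  exact congrArg (fun k : ℤ => (f0Sign i / 2 + k : ℝ)) hi

lemma mem_minimalShell {x : Fin 16 → ℝ} :
    x ∈ minimalShell ↔ vec x ∈ BW16 ∧ ∑ i, x i ^ 2 = 4 := by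
  refine ⟨fun hx => ⟨vec_mem_BW16_of_mem_minimalShell hx, sum_sq_of_mem_minimalShell hx⟩, ?_⟩
  rintro ⟨hx, hsum⟩
  obtain ⟨c, hc, hxc | hxc⟩ := vec_mem_BW16.mp hx <;> obtain rfl := funext hxc
  · simp only at hsum
    exact intCast_mem_minimalShell hc (by exact_mod_cast hsum)
  · refine f0Sign_half_add_mem_minimalShell hc ?_
    have hscale : ∑ i, (f0Sign i + 2 * c i : ℝ) ^ 2 = 4 * ∑ i, (f0Sign i / 2 + c i : ℝ) ^ 2 := by
      rw [mul_sum]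
      exact sum_congr rfl fun i _ => by ring
    rw [hsum, show (4 * 4 : ℝ) = 16 by norm_num] at hscale
    exact_mod_cast hscale

lemma piecewise_neg_mem_minimalShell {T : Finset (Fin 16)} (hT : T ∈ affinePlanes bits)
    {x : Fin 16 → ℝ} (hx : x ∈ minimalShell) : T.piecewise (-x) x ∈ minimalShell := by
  rw [mem_minimalShell] at hx ⊢
  refine ⟨vec_piecewise_neg_mem_BW16 hT hx.1, hx.2 ▸ sum_congr rfl fun i _ => ?_⟩
  by_cases hi : i ∈ T <;> simp [hi]

lemma prod_piecewise_neg_pow {ι R : Type*} [Fintype ι] [DecidableEq ι] [CommRing R] (T : Finset ι)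
    (x : ι → R) (α : ι → ℕ) :
    ∏ i, T.piecewise (-x) x i ^ α i = (-1) ^ (∑ i ∈ T, α i) * ∏ i, x i ^ α i := by
  have hfactor (i : ι) : T.piecewise (-x) x i ^ α i
      = (if i ∈ T then (-1) ^ α i else 1) * x i ^ α i := by
    by_cases hi : i ∈ T <;> simp [hi, neg_pow (x i)]
  simp only [hfactor, prod_mul_distrib, prod_ite_mem, univ_inter, prod_pow_eq_pow_sum]

lemma card_filter_ne_zero_le_sum {ι : Type*} [Fintype ι] (α : ι → ℕ) :
    #{i | α i ≠ 0} ≤ ∑ i, α i := by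
  rw [card_eq_sum_ones, ← sum_filter_ne_zero (f := α)]
  exact sum_le_sum fun i hi => Nat.one_le_iff_ne_zero.mpr (mem_filter.mp hi).2

lemma exists_affinePlane_odd_sum {α : Fin 16 → ℕ} (hα : ∑ i, α i < 8) (hodd : ∃ i, Odd (α i)) :
    ∃ T ∈ affinePlanes bits, Odd (∑ i ∈ T, α i) := by
  by_contra! hplanes
  obtain ⟨i, hi⟩ := hodd
  have hsupport : 16 ≤ 2 * #{j | (α j : ZMod 2) ≠ 0} := by
    refine card_le_two_mul_card_support (v := bits) (fun T hT => ?_) fun h => ?_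
    · rw [← Nat.cast_sum, ZMod.natCast_eq_zero_iff_even]
      exact Nat.not_odd_iff_even.mp (hplanes T hT)
    · exact Nat.not_even_iff_odd.mpr hi (ZMod.natCast_eq_zero_iff_even.mp (congrFun h i))
  have hle : #{j | (α j : ZMod 2) ≠ 0} ≤ #{j | α j ≠ 0} := by
    refine card_le_card (monotone_filter_right _ fun j _ hj h => hj ?_)
    rw [h, Nat.cast_zero]
  linarith [card_filter_ne_zero_le_sum α]

lemma sum_minimalShell_prod_pow_eq_zero {α : Fin 16 → ℕ} (hα : ∑ i, α i < 8)
    (hodd : ∃ i, Odd (α i)) : ∑ x ∈ minimalShell, ∏ i, x i ^ α i = 0 := by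
  obtain ⟨T, hT, hodd⟩ := exists_affinePlane_odd_sum hα hodd
  have hinv (x : Fin 16 → ℝ) : T.piecewise (-T.piecewise (-x) x) (T.piecewise (-x) x) = x := by
    funext i
    by_cases hi : i ∈ T <;> simp [hi]
  rw [← self_eq_neg, ← sum_neg_distrib]
  refine sum_nbij' (fun x => T.piecewise (-x) x) (fun x => T.piecewise (-x) x)
    (fun x => piecewise_neg_mem_minimalShell hT) (fun x => piecewise_neg_mem_minimalShell hT)
    (fun x _ => hinv x) (fun x _ => hinv x) fun x _ => ?_
  rw [prod_piecewise_neg_pow, hodd.neg_one_pow, neg_one_mul, neg_neg]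

lemma card_support_and_prod_doubleFactorial {ι : Type*} [Fintype ι] {β : ι → ℕ}
    (hβ : ∑ i, β i = 3) :
    #{i | β i ≠ 0} = 1 ∧ ∏ i, (2 * β i - 1)‼ = 15 ∨
      #{i | β i ≠ 0} = 2 ∧ ∏ i, (2 * β i - 1)‼ = 3 ∨
        #{i | β i ≠ 0} = 3 ∧ ∏ i, (2 * β i - 1)‼ = 1 := by
  classical
  have hle := card_filter_ne_zero_le_sum β
  set S : Finset ι := {i | β i ≠ 0} with hS
  have hpos {i : ι} (hi : i ∈ S) : 0 < β i := Nat.pos_of_ne_zero (mem_filter.mp hi).2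
  have hsum : ∑ i ∈ S, β i = 3 := by rw [hS, sum_filter_ne_zero, hβ]
  have hprod : ∏ i, (2 * β i - 1)‼ = ∏ i ∈ S, (2 * β i - 1)‼ :=
    (prod_filter_of_ne fun i _ hi => mt (fun h : β i = 0 => by rw [h]; rfl) hi).symm
  rw [hprod]
  have hcard : #S = 0 ∨ #S = 1 ∨ #S = 2 ∨ #S = 3 := by omega
  obtain h | h | h | h := hcard
  · simp [card_eq_zero.mp h] at hsum
  · obtain ⟨a, hSa⟩ := card_eq_one.mp h
    refine .inl ⟨h, ?_⟩
    rw [hSa, sum_singleton] at hsum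
    rw [hSa, prod_singleton, hsum]
    rfl
  · obtain ⟨a, b, hab, hSab⟩ := card_eq_two.mp h
    have ha : 0 < β a := hpos (by simp [hSab])
    have hb : 0 < β b := hpos (by simp [hSab])
    refine .inr (.inl ⟨h, ?_⟩)
    rw [hSab, sum_pair hab] at hsum
    rw [hSab, prod_pair hab]
    obtain ⟨ha, hb⟩ | ⟨ha, hb⟩ : β a = 1 ∧ β b = 2 ∨ β a = 2 ∧ β b = 1 := by omega
    all_goals rw [ha, hb]; rfl
  · refine .inr (.inr ⟨h, prod_eq_one fun i hi => ?_⟩)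
    have hone : ∀ i ∈ S, 1 = β i :=
      (sum_eq_sum_iff_of_le fun i hi => hpos hi).mp (by rw [hsum, sum_const, h]; rfl)
    rw [← hone i hi]
    rfl

lemma sum_minimalShell_prod_pow_two_mul_eq_card {β : Fin 16 → ℕ} (hβ : ∑ i, β i = 3) :
    ∑ x ∈ minimalShell, ∏ i, x i ^ (2 * β i) =
      128 * #{i | ({j | β j ≠ 0} : Finset (Fin 16)) ⊆ {i}} +
        16 * #{T ∈ affinePlanes bits | ({j | β j ≠ 0} : Finset (Fin 16)) ⊆ T} + 32 := by
  have hshape {r : ℝ} (hr : r ≠ 0) (T : Finset (Fin 16)) :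
      ∑ x ∈ signedVectors r T, ∏ i, x i ^ (2 * β i) =
        if ({j | β j ≠ 0} : Finset (Fin 16)) ⊆ T then 2 ^ #T * (r ^ 2) ^ 3 else 0 := by
    rw [sum_congr rfl fun x hx => prod_pow_two_mul_of_mem_signedVectors hx β, sum_const,
      card_signedVectors hr, hβ]
    split_ifs <;> simp
  have hplanes : ∑ T ∈ affinePlanes bits, ∑ x ∈ signedVectors (1 : ℝ) T, ∏ i, x i ^ (2 * β i) =
      16 * #{T ∈ affinePlanes bits | ({j | β j ≠ 0} : Finset (Fin 16)) ⊆ T} := by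
    rw [mul_comm, ← nsmul_eq_mul, ← sum_const, sum_filter]
    refine sum_congr rfl fun T hT => ?_
    rw [hshape one_ne_zero, (mem_affinePlanes.mp hT).1]
    norm_num
  have haxes : ∑ i, ∑ x ∈ signedVectors (2 : ℝ) {i}, ∏ j, x j ^ (2 * β j) =
      128 * #{i | ({j | β j ≠ 0} : Finset (Fin 16)) ⊆ {i}} := by
    rw [mul_comm, ← nsmul_eq_mul, ← sum_const, sum_filter]
    refine sum_congr rfl fun i _ => ?_
    rw [hshape two_ne_zero, card_singleton]
    norm_num
  have hspin : ∑ b ∈ codewords, ∏ i, spinVector b i ^ (2 * β i) = 32 := by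
    rw [sum_congr rfl fun b _ => prod_pow_two_mul_of_mem_signedVectors
      (spinVector_mem_signedVectors b) β, sum_const, card_codewords, if_pos (subset_univ _), hβ]
    norm_num
  rw [sum_minimalShell, haxes, hplanes, hspin]

lemma sum_minimalShell_prod_pow_two_mul {β : Fin 16 → ℕ} (hβ : ∑ i, β i = 3) :
    ∑ x ∈ minimalShell, ∏ i, x i ^ (2 * β i) = 48 * ↑(∏ i, (2 * β i - 1)‼) := by
  rw [sum_minimalShell_prod_pow_two_mul_eq_card hβ]
  have hcases := card_support_and_prod_doubleFactorial hβ
  set S : Finset (Fin 16) := {i | β i ≠ 0}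
  have haxes (hS : 1 < #S) : #{i | S ⊆ {i}} = 0 :=
    card_eq_zero.mpr (filter_eq_empty_iff.mpr fun _ _ hi => hS.not_ge (card_le_card hi))
  obtain ⟨hS, hprod⟩ | ⟨hS, hprod⟩ | ⟨hS, hprod⟩ := hcases <;> rw [hprod]
  · obtain ⟨a, ha⟩ := card_eq_one.mp hS
    have haxis : #{i | S ⊆ {i}} = 1 := by simp [ha, filter_eq]
    rw [haxis, card_affinePlanes_bits_superset (k := 2) (by rw [hS])]
    norm_num [Nat.factorial, Nat.descFactorial]
  · rw [haxes (by omega), card_affinePlanes_bits_superset (k := 1) (by rw [hS])]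
    norm_num [Nat.factorial, Nat.descFactorial]
  · rw [haxes (by omega), card_affinePlanes_bits_superset (k := 0) (by rw [hS])]
    norm_num [Nat.factorial, Nat.descFactorial]

open MvPolynomial in
lemma sum_minimalShell_linearForm_pow_six (v : Fin 16 → ℝ) :
    ∑ x ∈ minimalShell, (∑ i, v i * x i) ^ 6 = 720 * (∑ i, v i ^ 2) ^ 3 := by
  have h := map_linearForm_pow_two_mul (Λ := evalSum minimalShell id) (s := 3) (c := 48)
    (fun α hα hodd => ?_) (fun β hβ => ?_) v
  · simp only [evalSum_apply, map_pow, eval_linearForm, id_eq] at h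
    rw [h, show (2 * 3 - 1)‼ = 15 from rfl]
    norm_num
  · simp only [evalSum_apply, map_prod, map_pow, eval_X, id_eq]
    exact sum_minimalShell_prod_pow_eq_zero (by omega) hodd
  · simp only [evalSum_apply, map_prod, map_pow, eval_X, id_eq]
    exact sum_minimalShell_prod_pow_two_mul hβ

end MinimalShell

section NormalizedShell

open Finset

/-- The set `X18` as a `Finset`. -/
def normalizedShell : Finset (E 16) := minimalShell.image fun x => (2 : ℝ)⁻¹ • vec x

lemma inv_two_smul_vec_injective :
    Function.Injective fun x : Fin 16 → ℝ => (2 : ℝ)⁻¹ • (vec x : E 16) :=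
  (smul_right_injective _ (by norm_num)).comp (WithLp.equiv 2 (Fin 16 → ℝ)).symm.injective

lemma coe_normalizedShell : (normalizedShell : Set (E 16)) = X18 := by
  have hshell : {x ∈ (BW16 : Set (E 16)) | ‖x‖ ^ 2 = 4} = vec '' (minimalShell : Set _) := by
    ext x
    constructor
    · rintro ⟨hx, hnorm⟩
      exact ⟨fun i => x i, mem_minimalShell.mpr ⟨hx, by rwa [← norm_vec_sq]⟩, rfl⟩
    · rintro ⟨y, hy, rfl⟩
      obtain ⟨hmem, hsum⟩ := mem_minimalShell.mp hy
      exact ⟨hmem, by rw [norm_vec_sq, hsum]⟩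
  rw [X18, hshell, Set.image_image, normalizedShell, coe_image]

lemma mem_normalizedShell {x : E 16} : x ∈ normalizedShell ↔ x ∈ X18 := by
  rw [← coe_normalizedShell, mem_coe]

lemma card_normalizedShell : #normalizedShell = 4320 := by
  rw [normalizedShell, card_image_of_injective _ inv_two_smul_vec_injective, card_minimalShell]

lemma norm_eq_one_of_mem_X18 {x : E 16} (hx : x ∈ X18) : ‖x‖ = 1 := by
  obtain ⟨y, ⟨-, hy⟩, rfl⟩ := hx
  have hnorm : ‖y‖ = 2 := by
    rw [← abs_norm, ← abs_two, ← sq_eq_sq_iff_abs_eq_abs, hy]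
    norm_num
  norm_num [norm_smul, hnorm]

lemma neg_mem_X18 {x : E 16} (hx : x ∈ X18) : -x ∈ X18 := by
  obtain ⟨y, ⟨hy, hnorm⟩, rfl⟩ := hx
  exact ⟨-y, ⟨neg_mem hy, by rwa [norm_neg]⟩, smul_neg _ _⟩

lemma sum_normalizedShell_inner_pow_six (v : E 16) :
    ∑ x ∈ normalizedShell, ⟪v, x⟫ ^ 6 = 45 / 4 * ‖v‖ ^ 6 := by
  have hinner (x : Fin 16 → ℝ) : ⟪v, (2 : ℝ)⁻¹ • vec x⟫ ^ 6 = (∑ i, v i * x i) ^ 6 / 64 := by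
    have hvec : ⟪v, vec x⟫ = ∑ i, v i * x i := by simp [vec, PiLp.inner_apply, mul_comm]
    rw [real_inner_smul_right, hvec, mul_pow]
    ring
  rw [normalizedShell, sum_image inv_two_smul_vec_injective.injOn]
  simp only [hinner]
  rw [← sum_div, sum_minimalShell_linearForm_pow_six, ← EuclideanSpace.real_norm_sq_eq]
  ring

end NormalizedShell

/-- The normalized minimal shell of `BW₁₆` lies on the unit sphere, has exactly 4320
elements, and is a spherical 7-design. -/
theorem BW16_minimal_shell_design :
    X18 ⊆ Metric.sphere (0 : E 16) 1 ∧ X18.Finite ∧ X18.ncard = 4320 ∧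
    IsSphericalDesign X18 7 := by
  refine ⟨fun x hx => mem_sphere_zero_iff_norm.mpr (norm_eq_one_of_mem_X18 hx), ?_⟩
  rw [← coe_normalizedShell]
  refine ⟨Finset.finite_toSet _, by rw [Set.ncard_coe_finset, card_normalizedShell], ?_⟩
  refine isSphericalDesign_of_sum_inner_pow (s := 3) (c := 45 / 4) ?_ (fun x hx => ?_)
    (fun x hx => ?_) sum_normalizedShell_inner_pow_six
  · exact Finset.card_pos.mp (by rw [card_normalizedShell]; norm_num)
  · exact norm_eq_one_of_mem_X18 (mem_normalizedShell.mp hx)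
  · exact mem_normalizedShell.mpr (neg_mem_X18 (mem_normalizedShell.mp hx))
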